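/- arXiv:1701.02208 — 5 statements merged into one kernel-verified Lean document; each statement's English description precedes it below -/
import Mathlib

section
/- Let (K_i, φ_i)_{i=0,…,m} be a tower with K₀ = ∅ in which every map φ_i is an elementary inclusion or an elementary contraction, and let (K̂_i) be its coning filtration. Then for every i ∈ {0,…,m}, the set of vertices of K_i is equal to the set of vertices of K̂_i that are marked active after step i. -/
noncomputable section
open scoped Classical

/-- An abstract simplicial complex: a finite collection of nonempty finite sets
closed under taking nonempty subsets. -/
def IsComplex {V : Type*} [DecidableEq V] (K : Finset (Finset V)) : Prop :=
  ∀ σ ∈ K, σ.Nonempty ∧ ∀ τ ⊆ σ, τ.Nonempty → τ ∈ K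

/-- The closed star of a vertex `w` in `K`: all `τ ∈ K` with `τ ∪ {w} ∈ K`. -/
def closedStar {V : Type*} [DecidableEq V] (w : V) (K : Finset (Finset V)) :
    Finset (Finset V) :=
  K.filter (fun τ => insert w τ ∈ K)

/-- The active closed star: simplices of the closed star all of whose vertices lie
in the set `A` of active vertices. -/
def actCst {V : Type*} [DecidableEq V] (w : V) (K : Finset (Finset V)) (A : Finset V) :
    Finset (Finset V) :=
  (closedStar w K).filter (fun τ => τ ⊆ A)

/-- The vertex map of an elementary contraction sending `a` to `b` and fixing
every other vertex. -/
def contract {V : Type*} [DecidableEq V] (a b : V) : V → V :=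
  fun x => if x = a then b else x

/-- A tower of simplicial complexes `K 0 = ∅, K 1, …, K m` whose maps are elementary
inclusions or elementary contractions, bundled with its coning filtration `hatK` and
the set `act` of active vertices.  `step i = Sum.inl σ` records that `φ i` is the
elementary inclusion of `σ`, and `step i = Sum.inr (u, v)` records that `φ i` is the
elementary contraction of the vertices `u` and `v` (mapping both to the one that
stays active, chosen by comparing the sizes of the active closed stars). -/
structure ConedTower (V : Type*) [DecidableEq V] where
  m : ℕ
  K : ℕ → Finset (Finset V)
  hatK : ℕ → Finset (Finset V)
  act : ℕ → Finset V
  step : ℕ → (Finset V) ⊕ (V × V)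
  K_zero : K 0 = ∅
  hatK_zero : hatK 0 = ∅
  act_zero : act 0 = ∅
  complex : ∀ i ≤ m, IsComplex (K i)
  step_incl : ∀ i < m, ∀ σ, step i = Sum.inl σ →
    σ.Nonempty ∧ σ ∉ K i ∧ K (i+1) = insert σ (K i) ∧
    hatK (i+1) = insert σ (hatK i) ∧
    act (i+1) = (if σ.card = 1 then act i ∪ σ else act i)
  step_contr : ∀ i < m, ∀ u v, step i = Sum.inr (u, v) →
    u ≠ v ∧ ({u} : Finset V) ∈ K i ∧ ({v} : Finset V) ∈ K i ∧
    (if (actCst u (hatK i) (act i)).card ≤ (actCst v (hatK i) (act i)).card then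
      K (i+1) = (K i).image (fun σ => σ.image (contract u v)) ∧
      hatK (i+1) = hatK i ∪ (actCst u (hatK i) (act i)).image (fun τ => insert v τ) ∧
      act (i+1) = (act i).erase u
    else
      K (i+1) = (K i).image (fun σ => σ.image (contract v u)) ∧
      hatK (i+1) = hatK i ∪ (actCst v (hatK i) (act i)).image (fun τ => insert u τ) ∧
      act (i+1) = (act i).erase v)

/-!
The active vertices are exactly the vertices of the tower: an inclusion makes `v` active precisely
when it adds the simplex `{v}`, and a contraction deletes the same vertex from the tower as it
deactivates. Every active vertex lies in the coning filtration, because that filtration only grows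
and receives each vertex at the step that activates it.
-/

theorem singleton_eq_iff_card_eq_one_and_mem {V : Type*} {σ : Finset V} {v : V} :
    {v} = σ ↔ σ.card = 1 ∧ v ∈ σ := by
  constructor
  · rintro rfl
    exact ⟨Finset.card_singleton v, Finset.mem_singleton_self v⟩
  · rintro ⟨hcard, hv⟩
    obtain ⟨w, rfl⟩ := Finset.card_eq_one.1 hcard
    rw [Finset.mem_singleton.1 hv]

theorem IsComplex.singleton_mem {V : Type*} [DecidableEq V] {K : Finset (Finset V)}
    (hK : IsComplex K) {σ : Finset V} (hσ : σ ∈ K) {v : V} (hv : v ∈ σ) : {v} ∈ K :=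
  (hK σ hσ).2 {v} (Finset.singleton_subset_iff.2 hv) (Finset.singleton_nonempty v)

theorem IsComplex.singleton_mem_image_iff {V W : Type*} [DecidableEq V] [DecidableEq W]
    {K : Finset (Finset V)} (hK : IsComplex K) (f : V → W) {w : W} :
    {w} ∈ K.image (fun σ => σ.image f) ↔ ∃ v, {v} ∈ K ∧ f v = w := by
  constructor
  · intro hw
    obtain ⟨σ, hσ, hσw⟩ := Finset.mem_image.1 hw
    obtain ⟨v, hv, hvw⟩ := Finset.mem_image.1 (hσw ▸ Finset.mem_singleton_self w)
    exact ⟨v, hK.singleton_mem hσ hv, hvw⟩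
  · rintro ⟨v, hv, rfl⟩
    exact Finset.mem_image.2 ⟨{v}, hv, Finset.image_singleton f v⟩

theorem IsComplex.singleton_mem_image_contract_iff {V : Type*} [DecidableEq V]
    {K : Finset (Finset V)} (hK : IsComplex K) {a b : V} (hab : a ≠ b) (hb : {b} ∈ K) {v : V} :
    {v} ∈ K.image (fun σ => σ.image (contract a b)) ↔ v ≠ a ∧ {v} ∈ K := by
  rw [hK.singleton_mem_image_iff]
  constructor
  · rintro ⟨x, hx, rfl⟩
    by_cases hxa : x = a
    · rw [contract, if_pos hxa]
      exact ⟨hab.symm, hb⟩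
    · rw [contract, if_neg hxa]
      exact ⟨hxa, hx⟩
  · rintro ⟨hva, hv⟩
    exact ⟨v, hv, if_neg hva⟩

namespace ConedTower

variable {V : Type*} [DecidableEq V] (T : ConedTower V) {i : ℕ}

theorem mem_act_succ_iff_of_step_eq_inl (hi : i < T.m) {σ : Finset V}
    (hstep : T.step i = Sum.inl σ) {v : V} :
    v ∈ T.act (i + 1) ↔ {v} = σ ∨ v ∈ T.act i := by
  obtain ⟨-, -, -, -, hact⟩ := T.step_incl i hi σ hstep
  rw [hact, singleton_eq_iff_card_eq_one_and_mem]
  split_ifs with hcard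
  · rw [Finset.mem_union, or_comm, and_iff_right hcard]
  · simp only [hcard, false_and, false_or]

theorem exists_contract_of_step_eq_inr (hi : i < T.m) {u v : V}
    (hstep : T.step i = Sum.inr (u, v)) :
    ∃ a b, a ≠ b ∧ {b} ∈ T.K i ∧
      T.K (i + 1) = (T.K i).image (fun σ => σ.image (contract a b)) ∧
      T.hatK (i + 1) = T.hatK i ∪
        (actCst a (T.hatK i) (T.act i)).image (fun τ => insert b τ) ∧
      T.act (i + 1) = (T.act i).erase a := by
  obtain ⟨huv, hu, hv, hcontr⟩ := T.step_contr i hi u v hstep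
  split_ifs at hcontr
  · exact ⟨u, v, huv, hv, hcontr⟩
  · exact ⟨v, u, huv.symm, hu, hcontr⟩

theorem singleton_mem_K_iff_mem_act (hi : i ≤ T.m) {v : V} : {v} ∈ T.K i ↔ v ∈ T.act i := by
  induction i with
  | zero => simp only [T.K_zero, T.act_zero, Finset.notMem_empty]
  | succ i ih =>
    have hlt : i < T.m := hi
    specialize ih hlt.le
    rcases hstep : T.step i with σ | ⟨x, y⟩
    · obtain ⟨-, -, hK, -⟩ := T.step_incl i hlt σ hstep
      rw [hK, Finset.mem_insert, ih, T.mem_act_succ_iff_of_step_eq_inl hlt hstep]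
    · obtain ⟨a, b, hab, hb, hK, -, hact⟩ := T.exists_contract_of_step_eq_inr hlt hstep
      rw [hK, (T.complex i hlt.le).singleton_mem_image_contract_iff hab hb, ih, hact,
        Finset.mem_erase]

theorem singleton_mem_hatK_of_mem_act (hi : i ≤ T.m) {v : V} (hv : v ∈ T.act i) :
    {v} ∈ T.hatK i := by
  induction i with
  | zero => exact absurd (T.act_zero ▸ hv) (Finset.notMem_empty v)
  | succ i ih =>
    have hlt : i < T.m := hi
    specialize ih hlt.le
    rcases hstep : T.step i with σ | ⟨x, y⟩
    · obtain ⟨-, -, -, hhatK, -⟩ := T.step_incl i hlt σ hstep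
      rw [hhatK, Finset.mem_insert]
      exact ((T.mem_act_succ_iff_of_step_eq_inl hlt hstep).1 hv).imp_right ih
    · obtain ⟨a, b, -, -, -, hhatK, hact⟩ := T.exists_contract_of_step_eq_inr hlt hstep
      rw [hact] at hv
      rw [hhatK]
      exact Finset.mem_union_left _ (ih (Finset.mem_of_mem_erase hv))

end ConedTower

/-- For every `i ∈ {0,…,m}`, the set of vertices of `K i` equals the
set of vertices of `K̂ i` that are marked active after step `i`. -/
theorem vertices_eq_active {V : Type*} [DecidableEq V] (T : ConedTower V)
    (i : ℕ) (hi : i ≤ T.m) (v : V) :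
    ({v} : Finset V) ∈ T.K i ↔ (({v} : Finset V) ∈ T.hatK i ∧ v ∈ T.act i) := by
  rw [T.singleton_mem_K_iff_mem_act hi]
  exact (and_iff_right_of_imp (T.singleton_mem_hatK_of_mem_act hi)).symm
end
end

section
/- Let (K_i, φ_i)_{i=0,…,m} be a tower with K₀ = ∅ in which every map φ_i is an elementary inclusion or an elementary contraction, and let (K̂_i) be its coning filtration. Then for every i such that φ_i is an elementary contraction and every simplex σ ∈ K_i, the union σ ∪ φ_i(σ) is a simplex of K̂_{i+1}. (In other words, the composite maps K_i → K_{i+1} ↪ K̂_{i+1} and K_i ↪ K̂_i ↪ K̂_{i+1} are contiguous.) -/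
noncomputable section
open scoped Classical

/-!
Every simplex of `K i` survives in `hatK i` as a simplex with only active vertices. Hence, when `a`
is contracted to `b`, each `σ ∈ K i` containing `a` lies in the active closed star of `a`, so that
coning adds `insert b σ`, which is exactly `σ ∪ φ i (σ)`; a simplex not containing `a` is fixed by
`φ i` and already lies in `hatK i`.
-/

section Contract

variable {V : Type*} [DecidableEq V] {a b : V} {σ : Finset V}

theorem image_contract_of_notMem (ha : a ∉ σ) : σ.image (contract a b) = σ := by
  have hfix : Set.EqOn (contract a b) id σ := fun _ hx ↦ if_neg (ne_of_mem_of_not_mem hx ha)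
  rw [Finset.image_congr hfix, Finset.image_id]

theorem image_contract_of_mem (ha : a ∈ σ) :
    σ.image (contract a b) = insert b (σ.erase a) := by
  have hab : contract a b a = b := if_pos rfl
  have hfix : (σ.erase a).image (contract a b) = σ.erase a :=
    image_contract_of_notMem (Finset.notMem_erase a σ)
  calc
    σ.image (contract a b) = (insert a (σ.erase a)).image (contract a b) := by
      rw [Finset.insert_erase ha]
    _ = insert b (σ.erase a) := by rw [Finset.image_insert, hab, hfix]

theorem union_image_contract_of_mem (ha : a ∈ σ) :
    σ ∪ σ.image (contract a b) = insert b σ := by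
  rw [image_contract_of_mem ha, Finset.union_insert,
    Finset.union_eq_left.2 (Finset.erase_subset a σ)]

theorem image_contract_subset_erase {A : Finset V} (hab : a ≠ b) (hb : b ∈ A) (hσ : σ ⊆ A) :
    σ.image (contract a b) ⊆ A.erase a := by
  by_cases ha : a ∈ σ
  · rw [image_contract_of_mem ha]
    exact Finset.insert_subset (Finset.mem_erase.2 ⟨hab.symm, hb⟩) (Finset.erase_subset_erase a hσ)
  · rw [image_contract_of_notMem ha]
    exact Finset.subset_erase.2 ⟨hσ, ha⟩

end Contract

section Complex

variable {V : Type*} [DecidableEq V] {K H : Finset (Finset V)} {A σ τ : Finset V} {a b w x : V}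

theorem mem_closedStar_of_mem (hσ : σ ∈ K) (hw : w ∈ σ) : σ ∈ closedStar w K :=
  Finset.mem_filter.2 ⟨hσ, by rwa [Finset.insert_eq_of_mem hw]⟩

theorem IsComplex.erase_mem_closedStar (hK : IsComplex K) (hσ : σ ∈ K) (hw : w ∈ σ)
    (hne : (σ.erase w).Nonempty) : σ.erase w ∈ closedStar w K :=
  Finset.mem_filter.2
    ⟨(hK σ hσ).2 _ (Finset.erase_subset w σ) hne, by rwa [Finset.insert_erase hw]⟩

theorem IsComplex.singleton_mem_of_insert (hK : IsComplex (insert σ K)) (hcard : σ.card ≠ 1)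
    (hx : x ∈ σ) : {x} ∈ K := by
  have hmem : {x} ∈ insert σ K :=
    (hK σ (Finset.mem_insert_self σ K)).2 {x} (Finset.singleton_subset_iff.2 hx)
      (Finset.singleton_nonempty x)
  refine Finset.mem_of_mem_insert_of_ne hmem fun hσ ↦ hcard ?_
  rw [← hσ, Finset.card_singleton]

/-- The active subcomplex of `H`: its simplices all of whose vertices lie in the set `A` of active
vertices. In the coning filtration it contains the current complex of the tower. -/
def activeSubcomplex (H : Finset (Finset V)) (A : Finset V) : Finset (Finset V) :=
  H.filter (· ⊆ A)

theorem mem_activeSubcomplex : σ ∈ activeSubcomplex H A ↔ σ ∈ H ∧ σ ⊆ A :=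
  Finset.mem_filter

theorem activeSubcomplex_mono {H' : Finset (Finset V)} {A' : Finset V} (hH : H ⊆ H')
    (hA : A ⊆ A') : activeSubcomplex H A ⊆ activeSubcomplex H' A' := fun _ hσ ↦
  have ⟨hσH, hσA⟩ := mem_activeSubcomplex.1 hσ
  mem_activeSubcomplex.2 ⟨hH hσH, hσA.trans hA⟩

theorem closedStar_subset_actCst (hKH : K ⊆ activeSubcomplex H A) :
    closedStar w K ⊆ actCst w H A := by
  intro τ hτ
  obtain ⟨hτK, hwτ⟩ := Finset.mem_filter.1 hτ
  obtain ⟨hτH, hτA⟩ := mem_activeSubcomplex.1 (hKH hτK)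
  exact Finset.mem_filter.2
    ⟨Finset.mem_filter.2 ⟨hτH, (mem_activeSubcomplex.1 (hKH hwτ)).1⟩, hτA⟩

/-- The coning operation on `H` for the contraction of `a` to `b`: it adds to `H` the joins with `b`
of the simplices of the active closed star of `a`. -/
def coning (a b : V) (H : Finset (Finset V)) (A : Finset V) : Finset (Finset V) :=
  H ∪ (actCst a H A).image (insert b)

theorem subset_coning : H ⊆ coning a b H A :=
  Finset.subset_union_left

theorem insert_mem_coning (hτ : τ ∈ actCst a H A) : insert b τ ∈ coning a b H A :=
  Finset.mem_union_right _ (Finset.mem_image_of_mem _ hτ)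

theorem union_image_contract_mem_coning (hσ : σ ∈ activeSubcomplex H A) :
    σ ∪ σ.image (contract a b) ∈ coning a b H A := by
  by_cases ha : a ∈ σ
  · rw [union_image_contract_of_mem ha]
    exact insert_mem_coning (closedStar_subset_actCst subset_rfl (mem_closedStar_of_mem hσ ha))
  · rw [image_contract_of_notMem ha, Finset.union_self]
    exact subset_coning (mem_activeSubcomplex.1 hσ).1

theorem IsComplex.image_contract_mem_coning (hK : IsComplex K) (hKH : K ⊆ activeSubcomplex H A)
    (hb : {b} ∈ K) (hσ : σ ∈ K) : σ.image (contract a b) ∈ coning a b H A := by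
  have hKcone : K ⊆ coning a b H A := fun τ hτ ↦
    subset_coning (mem_activeSubcomplex.1 (hKH hτ)).1
  by_cases ha : a ∈ σ
  · rw [image_contract_of_mem ha]
    obtain hempty | hne := (σ.erase a).eq_empty_or_nonempty
    · rw [hempty]
      exact hKcone hb
    · exact insert_mem_coning (closedStar_subset_actCst hKH (hK.erase_mem_closedStar hσ ha hne))
  · rw [image_contract_of_notMem ha]
    exact hKcone hσ

theorem IsComplex.image_contract_subset_activeSubcomplex (hK : IsComplex K)
    (hKH : K ⊆ activeSubcomplex H A) (hab : a ≠ b) (hb : {b} ∈ K) :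
    K.image (Finset.image (contract a b)) ⊆ activeSubcomplex (coning a b H A) (A.erase a) := by
  have hbA : b ∈ A := Finset.singleton_subset_iff.1 (mem_activeSubcomplex.1 (hKH hb)).2
  refine Finset.image_subset_iff.2 fun σ hσ ↦ mem_activeSubcomplex.2 ⟨?_, ?_⟩
  · exact hK.image_contract_mem_coning hKH hb hσ
  · exact image_contract_subset_erase hab hbA (mem_activeSubcomplex.1 (hKH hσ)).2

theorem IsComplex.insert_subset_activeSubcomplex (hK : IsComplex (insert σ K))
    (hKH : K ⊆ activeSubcomplex H A) :
    insert σ K ⊆ activeSubcomplex (insert σ H) (if σ.card = 1 then A ∪ σ else A) := by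
  have hA : A ⊆ if σ.card = 1 then A ∪ σ else A := by
    split_ifs
    exacts [Finset.subset_union_left, subset_rfl]
  have hσ : σ ⊆ if σ.card = 1 then A ∪ σ else A := by
    split_ifs with hcard
    · exact Finset.subset_union_right
    · intro x hx
      have hxK : {x} ∈ K := hK.singleton_mem_of_insert hcard hx
      exact Finset.singleton_subset_iff.1 (mem_activeSubcomplex.1 (hKH hxK)).2
  exact Finset.insert_subset (mem_activeSubcomplex.2 ⟨Finset.mem_insert_self σ H, hσ⟩)
    (hKH.trans (activeSubcomplex_mono (Finset.subset_insert σ H) hA))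

end Complex

namespace ConedTower

variable {V : Type*} [DecidableEq V] {T : ConedTower V} {i : ℕ} {a b u v : V}

/-- The `i`-th map of the tower contracts `a` to `b`, so that `a` becomes inactive and its active
closed star is coned with apex `b`. This orients the contraction of an unordered pair of vertices,
making the two cases of `ConedTower.step_contr` instances of one notion. -/
structure ContractsTo (T : ConedTower V) (i : ℕ) (a b : V) : Prop where
  ne : a ≠ b
  target_mem : {b} ∈ T.K i
  K_succ : T.K (i + 1) = (T.K i).image (Finset.image (contract a b))
  hatK_succ : T.hatK (i + 1) = coning a b (T.hatK i) (T.act i)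
  act_succ : T.act (i + 1) = (T.act i).erase a

theorem contractsTo_of_card_le (hi : i < T.m) (h : T.step i = Sum.inr (u, v))
    (hle : (actCst u (T.hatK i) (T.act i)).card ≤ (actCst v (T.hatK i) (T.act i)).card) :
    T.ContractsTo i u v := by
  obtain ⟨hne, -, hv, hstep⟩ := T.step_contr i hi u v h
  obtain ⟨hK, hhatK, hact⟩ := (if_pos hle).mp hstep
  exact ⟨hne, hv, hK, hhatK, hact⟩

theorem contractsTo_of_not_card_le (hi : i < T.m) (h : T.step i = Sum.inr (u, v))
    (hnle : ¬(actCst u (T.hatK i) (T.act i)).card ≤ (actCst v (T.hatK i) (T.act i)).card) :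
    T.ContractsTo i v u := by
  obtain ⟨hne, hu, -, hstep⟩ := T.step_contr i hi u v h
  obtain ⟨hK, hhatK, hact⟩ := (if_neg hnle).mp hstep
  exact ⟨hne.symm, hu, hK, hhatK, hact⟩

theorem exists_contractsTo (hi : i < T.m) (h : T.step i = Sum.inr (u, v)) :
    ∃ a b, T.ContractsTo i a b :=
  (em _).elim (fun hle ↦ ⟨u, v, contractsTo_of_card_le hi h hle⟩)
    fun hnle ↦ ⟨v, u, contractsTo_of_not_card_le hi h hnle⟩

theorem K_subset_activeSubcomplex (hi : i ≤ T.m) :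
    T.K i ⊆ activeSubcomplex (T.hatK i) (T.act i) := by
  induction i with
  | zero =>
    rw [T.K_zero]
    exact Finset.empty_subset _
  | succ i ih =>
    have hlt : i < T.m := hi
    have hsub := ih hlt.le
    rcases hstep : T.step i with σ | ⟨u, v⟩
    · obtain ⟨-, -, hK, hhatK, hact⟩ := T.step_incl i hlt σ hstep
      have hcomplex : IsComplex (insert σ (T.K i)) := hK ▸ T.complex (i + 1) hi
      rw [hK, hhatK, hact]
      exact hcomplex.insert_subset_activeSubcomplex hsub
    · obtain ⟨a, b, hab⟩ := exists_contractsTo hlt hstep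
      rw [hab.K_succ, hab.hatK_succ, hab.act_succ]
      exact (T.complex i hlt.le).image_contract_subset_activeSubcomplex hsub hab.ne hab.target_mem

theorem ContractsTo.union_image_mem_hatK (hab : T.ContractsTo i a b) (hi : i ≤ T.m)
    {σ : Finset V} (hσ : σ ∈ T.K i) : σ ∪ σ.image (contract a b) ∈ T.hatK (i + 1) := by
  rw [hab.hatK_succ]
  exact union_image_contract_mem_coning (K_subset_activeSubcomplex hi hσ)

end ConedTower

/-- If `φ i` is the elementary contraction of `u` and `v`, then for
every simplex `σ ∈ K i`, the union `σ ∪ φ i (σ)` is a simplex of `K̂ (i+1)`.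
(Here `φ i` maps both contracted vertices to the one that stays active, so
`φ i (σ)` is the image of `σ` under the corresponding `contract` map.)  In other
words, the composites `K_i → K_{i+1} ↪ K̂_{i+1}` and `K_i ↪ K̂_i ↪ K̂_{i+1}` are
contiguous. -/
theorem contiguous_of_contraction {V : Type*} [DecidableEq V] (T : ConedTower V)
    (i : ℕ) (hi : i < T.m) (u v : V) (h : T.step i = Sum.inr (u, v))
    (σ : Finset V) (hσ : σ ∈ T.K i) :
    (if (actCst u (T.hatK i) (T.act i)).card ≤ (actCst v (T.hatK i) (T.act i)).card
      then σ ∪ σ.image (contract u v)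
      else σ ∪ σ.image (contract v u)) ∈ T.hatK (i+1) := by
  split_ifs with hle
  · exact (ConedTower.contractsTo_of_card_le hi h hle).union_image_mem_hatK hi.le hσ
  · exact (ConedTower.contractsTo_of_not_card_le hi h hle).union_image_mem_hatK hi.le hσ
end
end

section
/- Let W be a full binary forest. Then every node x of W is deleted by the pruning procedure exactly in the r(x)-th iteration; that is, x belongs to W_(r(x)−1) but not to W_(r(x)). -/
noncomputable section
open scoped Classical

/-- A finite full binary forest.  Nodes are natural numbers, every node's parent has a
strictly larger index, and every node has exactly `0` or `2` children. -/
structure PForest where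
  nodes : Finset ℕ
  parent : ℕ → Option ℕ
  parent_lt : ∀ x y, parent x = some y → x < y
  parent_mem : ∀ x ∈ nodes, ∀ y, parent x = some y → y ∈ nodes
  parent_none_of_not_mem : ∀ x, x ∉ nodes → parent x = none
  full : ∀ x ∈ nodes, (nodes.filter (fun y => parent y = some x)).card = 0 ∨
    (nodes.filter (fun y => parent y = some x)).card = 2

/-- The children of a node. -/
def PForest.children (F : PForest) (x : ℕ) : Finset ℕ :=
  F.nodes.filter (fun y => F.parent y = some x)

theorem PForest.child_lt (F : PForest) {y x : ℕ} (h : y ∈ F.children x) : y < x :=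
  F.parent_lt _ _ (Finset.mem_filter.mp h).2

/-- The function `r`: `r(x) = 1` for leaves; for an internal node with children
`y₁, y₂`, `r(x) = r(y₁) + 1` if `r(y₁) = r(y₂)` and `r(x) = max (r(y₁)) (r(y₂))`
otherwise. -/
def PForest.rank (F : PForest) (x : ℕ) : ℕ :=
  if h : (F.children x).Nonempty then
    if F.rank ((F.children x).min' h) = F.rank ((F.children x).max' h)
    then F.rank ((F.children x).min' h) + 1
    else max (F.rank ((F.children x).min' h)) (F.rank ((F.children x).max' h))
  else 1
termination_by x
decreasing_by
  all_goals first
    | exact F.child_lt (Finset.min'_mem _ h)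
    | exact F.child_lt (Finset.max'_mem _ h)

/-- `x` is a leaf of the induced forest on the node set `S`. -/
def PForest.leafIn (F : PForest) (S : Finset ℕ) (x : ℕ) : Prop :=
  x ∈ S ∧ ∀ y ∈ S, F.parent y ≠ some x

/-- `x` has a sibling in the induced forest on the node set `S`. -/
def PForest.hasSiblingIn (F : PForest) (S : Finset ℕ) (x : ℕ) : Prop :=
  ∃ y ∈ S, y ≠ x ∧ F.parent y = F.parent x ∧ F.parent x ≠ none

/-- An ascending path of the forest: a nonempty list of nodes in which each entry is
followed by its parent. -/
def PForest.IsAscPath (F : PForest) (l : List ℕ) : Prop :=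
  l ≠ [] ∧ (∀ x ∈ l, x ∈ F.nodes) ∧ l.Chain' (fun a b => F.parent a = some b)

/-- An only-child-path of the induced forest on the node set `S`: an ascending path
starting at a leaf of `S`, all of whose nodes except the last have no sibling in `S`,
and ending at the first node that has a sibling in `S`, or at a root. -/
def PForest.OnlyChildPath (F : PForest) (S : Finset ℕ) (l : List ℕ) : Prop :=
  l ≠ [] ∧ (∀ x ∈ l, x ∈ S) ∧ l.Chain' (fun a b => F.parent a = some b) ∧
  (∀ x, l.head? = some x → F.leafIn S x) ∧
  (∀ x ∈ l.dropLast, ¬ F.hasSiblingIn S x) ∧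
  (∀ x, l.getLast? = some x → (F.hasSiblingIn S x ∨ F.parent x = none))

/-- One iteration of the pruning procedure: delete all nodes lying on some
only-child-path of `S`. -/
def PForest.prune (F : PForest) (S : Finset ℕ) : Finset ℕ :=
  S.filter (fun x => ¬ ∃ l, F.OnlyChildPath S l ∧ x ∈ l)

/-- `W_(i)`: the forest left after `i` iterations of the pruning procedure. -/
def PForest.Wset (F : PForest) (i : ℕ) : Finset ℕ :=
  (F.prune)^[i] F.nodes

/-- `x` is a (weak) ancestor of `y`: `x` is reachable from `y` by iterating `parent`. -/
def PForest.Ancestor (F : PForest) (x y : ℕ) : Prop :=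
  Relation.ReflTransGen (fun a b => F.parent a = some b) y x

/-- `s(x)`: the number of nodes in the subtree rooted at `x`. -/
def PForest.subtreeSize (F : PForest) (x : ℕ) : ℕ :=
  (F.nodes.filter (fun y => F.Ancestor x y)).card

/-- The leaves of the forest. -/
def PForest.leaves (F : PForest) : Finset ℕ :=
  F.nodes.filter (fun x => F.children x = ∅)

/-! The set `W_(i)` consists of the nodes of rank greater than `i`. By induction on `i`, it suffices
that pruning the set `S` of nodes of rank greater than `i` deletes exactly the nodes of rank
`i + 1`. A leaf of `S` has rank `i + 1`, since its children in the full forest all have rank at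
most `i`. If `x ∈ S` has rank `i + 1`, then the parent of `x` has rank `i + 1` as well if and only
if the other child has rank at most `i`, i.e. if and only if `x` has no sibling in `S`. So the nodes
reached from the leaves of `S` along only-child-paths are those of rank `i + 1`. -/

theorem isChain_and_iff_forall_mem_dropLast {α : Type*} {r : α → α → Prop} {p : α → Prop}
    {l : List α} :
    l.IsChain (fun a b => r a b ∧ p a) ↔ l.IsChain r ∧ ∀ a ∈ l.dropLast, p a := by
  induction l using List.twoStepInduction with
  | nil => simp
  | singleton a => simp
  | cons_cons a b l _ ih =>
    simp only [List.isChain_cons_cons, List.dropLast_cons_cons, List.forall_mem_cons, ih]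
    tauto

theorem exists_isChain_mem_of_reflTransGen {α : Type*} {r : α → α → Prop} {a x e : α}
    (hax : Relation.ReflTransGen r a x) (hxe : Relation.ReflTransGen r x e) :
    ∃ (l : List α) (hne : l ≠ []), l.IsChain r ∧ l.head hne = a ∧ l.getLast hne = e ∧ x ∈ l := by
  obtain ⟨l₁, hne, hl₁, hhead, hlast⟩ :=
    List.exists_isChain_ne_nil_of_relationReflTransGen hax
  obtain ⟨l₂, hl₂, hlast₂⟩ := List.exists_isChain_cons_of_relationReflTransGen hxe
  have hx : x ∈ l₁ := hlast ▸ List.getLast_mem hne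
  have hjoin : ∀ y ∈ l₁.getLast?, ∀ z ∈ l₂.head?, r y z := by
    intro y hy z hz
    rw [List.getLast?_eq_some_getLast hne, hlast, Option.mem_some_iff] at hy
    exact hy ▸ hl₂.rel_head? hz
  refine ⟨l₁ ++ l₂, List.append_ne_nil_of_left_ne_nil hne l₂, hl₁.append hl₂.tail hjoin, ?_, ?_,
    List.mem_append_left l₂ hx⟩
  · rw [List.head_append_of_ne_nil hne, hhead]
  · cases l₂ with
    | nil => simpa [hlast] using hlast₂
    | cons b l₂ => simpa using hlast₂

namespace PForest

variable {F : PForest} {S : Finset ℕ} {i x y z : ℕ}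

section Rank

theorem mem_nodes_of_parent_eq_some (h : F.parent y = some x) : y ∈ F.nodes := by
  by_contra hy
  simp [F.parent_none_of_not_mem y hy] at h

theorem mem_children : y ∈ F.children x ↔ F.parent y = some x := by
  simpa [children] using mem_nodes_of_parent_eq_some

theorem exists_children_eq_pair (h : F.parent y = some x) :
    ∃ z, z ≠ y ∧ F.children x = {y, z} := by
  have hy : y ∈ F.children x := mem_children.mpr h
  have hx : x ∈ F.nodes := F.parent_mem y (mem_nodes_of_parent_eq_some h) x h
  have hcard : (F.children x).card = 2 :=
    (F.full x hx).resolve_left (Finset.card_ne_zero_of_mem hy)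
  obtain ⟨a, b, hab, hch⟩ := Finset.card_eq_two.mp hcard
  rw [hch, Finset.mem_insert, Finset.mem_singleton] at hy
  rcases hy with rfl | rfl
  · exact ⟨b, hab.symm, hch⟩
  · exact ⟨a, hab, hch.trans (Finset.pair_comm a y)⟩

theorem rank_of_children_eq_empty (h : F.children x = ∅) : F.rank x = 1 := by
  rw [rank, dif_neg (Finset.not_nonempty_iff_eq_empty.mpr h)]

theorem rank_of_children_eq_pair (h : F.children x = {y, z}) :
    F.rank x = if F.rank y = F.rank z then F.rank y + 1 else max (F.rank y) (F.rank z) := by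
  have hne : (F.children x).Nonempty := h ▸ Finset.insert_nonempty y {z}
  rw [rank, dif_pos hne]
  simp only [h, Finset.min'_pair, Finset.max'_pair]
  rcases le_total y z with hyz | hzy
  · simp only [min_eq_left hyz, max_eq_right hyz]
  · simp only [min_eq_right hzy, max_eq_left hzy]
    split_ifs <;> omega

theorem rank_le_of_parent_eq_some (h : F.parent y = some x) : F.rank y ≤ F.rank x := by
  obtain ⟨z, -, hch⟩ := exists_children_eq_pair h
  rw [rank_of_children_eq_pair hch]
  split_ifs <;> omega

theorem rank_pos (F : PForest) (x : ℕ) : 0 < F.rank x := by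
  induction x using Nat.strong_induction_on with
  | _ x ih =>
    rcases (F.children x).eq_empty_or_nonempty with hempty | ⟨y, hy⟩
    · simp [rank_of_children_eq_empty hempty]
    · exact (ih y (F.child_lt hy)).trans_le (rank_le_of_parent_eq_some (mem_children.mp hy))

theorem rank_le_succ_of_forall_child (h : ∀ y, F.parent y = some x → F.rank y ≤ i) :
    F.rank x ≤ i + 1 := by
  rcases (F.children x).eq_empty_or_nonempty with hempty | ⟨y, hy⟩
  · simp [rank_of_children_eq_empty hempty]
  · obtain ⟨z, -, hch⟩ := exists_children_eq_pair (mem_children.mp hy)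
    have hz : z ∈ F.children x := by simp [hch]
    have hyi : F.rank y ≤ i := h y (mem_children.mp hy)
    have hzi : F.rank z ≤ i := h z (mem_children.mp hz)
    rw [rank_of_children_eq_pair hch]
    split_ifs <;> omega

theorem rank_eq_rank_iff_of_children_eq_pair (h : F.children x = {y, z}) :
    F.rank x = F.rank y ↔ F.rank z < F.rank y := by
  rw [rank_of_children_eq_pair h]
  split_ifs <;> omega

end Rank

section Prune

theorem hasSiblingIn_iff_of_children_eq_pair (hzy : z ≠ y) (h : F.children x = {y, z}) :
    F.hasSiblingIn S y ↔ z ∈ S := by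
  have hchild : ∀ w, F.parent w = some x ↔ w = y ∨ w = z := by simp [← mem_children, h]
  have hy : F.parent y = some x := (hchild y).mpr (.inl rfl)
  constructor
  · rintro ⟨w, hwS, hwy, hw, -⟩
    rcases (hchild w).mp (hw.trans hy) with rfl | rfl
    · exact absurd rfl hwy
    · exact hwS
  · exact fun hzS => ⟨z, hzS, hzy, ((hchild z).mpr (.inr rfl)).trans hy.symm, by simp [hy]⟩

/-- A set of nodes closed under taking parents. -/
def IsParentClosed (F : PForest) (S : Finset ℕ) : Prop :=
  ∀ ⦃x⦄, x ∈ S → ∀ ⦃y⦄, F.parent x = some y → y ∈ S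

/-- The relation between consecutive nodes of an only-child-path of `S`: a step to the parent from
a node that has no sibling in `S`. -/
def OnlyChildStep (F : PForest) (S : Finset ℕ) (x y : ℕ) : Prop :=
  F.parent x = some y ∧ ¬ F.hasSiblingIn S x

theorem OnlyChildPath.isChain_onlyChildStep {l : List ℕ} (h : F.OnlyChildPath S l) :
    l.IsChain (F.OnlyChildStep S) :=
  isChain_and_iff_forall_mem_dropLast.mpr ⟨h.2.2.1, h.2.2.2.2.1⟩

theorem IsParentClosed.exists_reflTransGen_onlyChildStep_last (hS : F.IsParentClosed S)
    (hx : x ∈ S) :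
    ∃ e, Relation.ReflTransGen (F.OnlyChildStep S) x e ∧
      (F.hasSiblingIn S e ∨ F.parent e = none) := by
  obtain ⟨e, he⟩ := Finset.exists_maximal
    (s := {e ∈ S | Relation.ReflTransGen (F.OnlyChildStep S) x e})
    ⟨x, Finset.mem_filter.mpr ⟨hx, .refl⟩⟩
  obtain ⟨heS, hxe⟩ := Finset.mem_filter.mp he.prop
  refine ⟨e, hxe, ?_⟩
  by_contra! hcontinue
  obtain ⟨y, hy⟩ := Option.ne_none_iff_exists'.mp hcontinue.2
  have hmem : y ∈ S ∧ Relation.ReflTransGen (F.OnlyChildStep S) x y :=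
    ⟨hS heS hy, hxe.tail ⟨hy, hcontinue.1⟩⟩
  exact he.not_gt (Finset.mem_filter.mpr hmem) (F.parent_lt e y hy)

theorem IsParentClosed.exists_onlyChildPath_mem_iff (hS : F.IsParentClosed S) :
    (∃ l, F.OnlyChildPath S l ∧ x ∈ l) ↔
      ∃ a, F.leafIn S a ∧ Relation.ReflTransGen (F.OnlyChildStep S) a x := by
  constructor
  · rintro ⟨l, hl, hxl⟩
    have hne : l ≠ [] := hl.1
    refine ⟨l.head hne, hl.2.2.2.1 _ (List.head?_eq_some_head hne), ?_⟩
    exact hl.isChain_onlyChildStep.induction _ _ (fun _ _ hstep hreach => hreach.tail hstep)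
      (fun _ => .refl) x hxl
  · rintro ⟨a, ha, hax⟩
    have hx : x ∈ S := by
      induction hax with
      | refl => exact ha.1
      | tail _ hstep hb => exact hS hb hstep.1
    obtain ⟨e, hxe, he⟩ := hS.exists_reflTransGen_onlyChildStep_last hx
    obtain ⟨l, hne, hl, hhead, hlast, hxl⟩ := exists_isChain_mem_of_reflTransGen hax hxe
    have hlS : ∀ b ∈ l, b ∈ S :=
      hl.induction _ _ (fun _ _ hstep hb => hS hb hstep.1) (fun _ => hhead ▸ ha.1)
    obtain ⟨hparent, hsibling⟩ := isChain_and_iff_forall_mem_dropLast.mp hl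
    refine ⟨l, ⟨hne, hlS, hparent, ?_, hsibling, ?_⟩, hxl⟩
    · simpa [List.head?_eq_some_head hne, hhead] using ha
    · simpa [List.getLast?_eq_some_getLast hne, hlast] using he

theorem IsParentClosed.mem_prune_iff (hS : F.IsParentClosed S) :
    x ∈ F.prune S ↔
      x ∈ S ∧ ¬ ∃ a, F.leafIn S a ∧ Relation.ReflTransGen (F.OnlyChildStep S) a x := by
  rw [prune, Finset.mem_filter, hS.exists_onlyChildPath_mem_iff]

end Prune

section RankGT

/-- The nodes of rank greater than `i`; this set turns out to be `W_(i)`. -/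
def rankGT (F : PForest) (i : ℕ) : Finset ℕ :=
  {x ∈ F.nodes | i < F.rank x}

theorem mem_rankGT : x ∈ F.rankGT i ↔ x ∈ F.nodes ∧ i < F.rank x :=
  Finset.mem_filter

theorem rankGT_zero : F.rankGT 0 = F.nodes :=
  Finset.filter_true_of_mem fun x _ => F.rank_pos x

theorem isParentClosed_rankGT : F.IsParentClosed (F.rankGT i) := by
  intro x hx y hxy
  obtain ⟨hnodes, hrank⟩ := mem_rankGT.mp hx
  exact mem_rankGT.mpr
    ⟨F.parent_mem x hnodes y hxy, hrank.trans_le (rank_le_of_parent_eq_some hxy)⟩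

theorem rank_of_leafIn_rankGT (h : F.leafIn (F.rankGT i) x) : F.rank x = i + 1 := by
  refine le_antisymm (rank_le_succ_of_forall_child fun y hy => ?_) (mem_rankGT.mp h.1).2
  by_contra! hrank
  exact h.2 y (mem_rankGT.mpr ⟨mem_nodes_of_parent_eq_some hy, hrank⟩) hy

theorem rank_parent_eq_succ_iff (hy : F.rank y = i + 1) (h : F.parent y = some x) :
    F.rank x = i + 1 ↔ ¬ F.hasSiblingIn (F.rankGT i) y := by
  obtain ⟨z, hzy, hch⟩ := exists_children_eq_pair h
  have hz : z ∈ F.nodes :=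
    mem_nodes_of_parent_eq_some (mem_children.mp (by simp [hch] : z ∈ F.children x))
  rw [← hy, rank_eq_rank_iff_of_children_eq_pair hch,
    hasSiblingIn_iff_of_children_eq_pair hzy hch, mem_rankGT, hy]
  simp [hz]

theorem rank_of_reflTransGen_onlyChildStep
    (h : Relation.ReflTransGen (F.OnlyChildStep (F.rankGT i)) x y) (hx : F.rank x = i + 1) :
    F.rank y = i + 1 := by
  induction h with
  | refl => exact hx
  | tail _ hstep ih => exact (rank_parent_eq_succ_iff ih hstep.1).mpr hstep.2

theorem exists_leafIn_rankGT_reflTransGen (hx : x ∈ F.nodes) (hrank : F.rank x = i + 1) :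
    ∃ a, F.leafIn (F.rankGT i) a ∧
      Relation.ReflTransGen (F.OnlyChildStep (F.rankGT i)) a x := by
  induction x using Nat.strong_induction_on with
  | _ x ih =>
    by_cases hleaf : F.leafIn (F.rankGT i) x
    · exact ⟨x, hleaf, .refl⟩
    · have hxS : x ∈ F.rankGT i := mem_rankGT.mpr ⟨hx, by omega⟩
      obtain ⟨y, hyS, hyx⟩ : ∃ y ∈ F.rankGT i, F.parent y = some x := by
        by_contra! hnone
        exact hleaf ⟨hxS, hnone⟩
      obtain ⟨hy, hlt⟩ := mem_rankGT.mp hyS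
      have hyrank : F.rank y = i + 1 :=
        le_antisymm (hrank ▸ rank_le_of_parent_eq_some hyx) hlt
      obtain ⟨a, ha, hay⟩ := ih y (F.parent_lt y x hyx) hy hyrank
      exact ⟨a, ha, hay.tail ⟨hyx, (rank_parent_eq_succ_iff hyrank hyx).mp hrank⟩⟩

theorem prune_rankGT (F : PForest) (i : ℕ) : F.prune (F.rankGT i) = F.rankGT (i + 1) := by
  ext x
  have hdeleted (hx : x ∈ F.nodes) :
      (∃ a, F.leafIn (F.rankGT i) a ∧
        Relation.ReflTransGen (F.OnlyChildStep (F.rankGT i)) a x) ↔ F.rank x = i + 1 :=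
    ⟨fun ⟨_, ha, hax⟩ => rank_of_reflTransGen_onlyChildStep hax (rank_of_leafIn_rankGT ha),
      exists_leafIn_rankGT_reflTransGen hx⟩
  rw [isParentClosed_rankGT.mem_prune_iff, mem_rankGT, mem_rankGT, and_assoc]
  refine and_congr_right fun hx => ?_
  rw [hdeleted hx]
  omega

theorem Wset_eq_rankGT (F : PForest) (i : ℕ) : F.Wset i = F.rankGT i := by
  induction i with
  | zero => exact rankGT_zero.symm
  | succ i ih => rw [Wset, Function.iterate_succ_apply', ← Wset, ih, prune_rankGT]

end RankGT

end PForest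

/-- Every node `x` of a full binary forest is deleted by the pruning
procedure exactly in the `r(x)`-th iteration: `x ∈ W_(r(x)−1)` and `x ∉ W_(r(x))`. -/
theorem pruned_at_rank (F : PForest) (x : ℕ) (hx : x ∈ F.nodes) :
    x ∈ F.Wset (F.rank x - 1) ∧ x ∉ F.Wset (F.rank x) := by
  simp only [F.Wset_eq_rankGT, PForest.mem_rankGT, lt_irrefl, and_false, not_false_eq_true,
    and_true]
  exact ⟨hx, Nat.sub_one_lt_of_lt (F.rank_pos x)⟩
end
end

section
/- Let W be a full binary forest with n₀ ≥ 1 leaves. Then the pruning procedure deletes every node of W within at most 1 + log₂(n₀) iterations; that is, W_(i) is empty for every integer i ≥ 1 + log₂(n₀). -/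
noncomputable section
open scoped Classical

/-!
The proof counts the leaves of `W` below a node. Let `S` be closed under taking parents. If every
node of `S` has at least `m` leaves below it, then every node of `F.prune S` has at least `2 * m`:
a surviving node is not a leaf of `S`. If one of its children in `S` has a sibling in `S`, the
leaves below these two children are disjoint; otherwise that child survives as well, since an
only-child-path through it would continue to its parent, and one descends to it. Hence every node
of `W_(i)` has at least `2 ^ i` leaves below it.
-/

namespace PForest

variable {F : PForest} {S : Finset ℕ} {l : List ℕ} {x y z m : ℕ}

theorem OnlyChildPath.child_mem (hl : F.OnlyChildPath S l) (hx : x ∈ l) (hy : y ∈ S)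
    (hyx : F.parent y = some x) : y ∈ l := by
  obtain ⟨-, -, hchain, hhead, honly, -⟩ := hl
  obtain ⟨l₁, l₂, rfl⟩ := List.append_of_mem hx
  obtain rfl | ⟨l₁, z, rfl⟩ := l₁.eq_nil_or_concat'
  · exact absurd hyx ((hhead x rfl).2 y hy)
  · rw [List.append_assoc, List.singleton_append] at hchain honly ⊢
    have hzx : F.parent z = some x := (List.isChain_append_cons_cons.mp hchain).2.1
    have hz : ¬ F.hasSiblingIn S z := honly z (by simp [List.dropLast_append_of_ne_nil])
    obtain rfl : y = z := by
      by_contra hyz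
      exact hz ⟨y, hy, hyz, hyx.trans hzx.symm, by simp [hzx]⟩
    simp

theorem OnlyChildPath.parent_mem (hl : F.OnlyChildPath S l) (hy : y ∈ l)
    (honly : ¬ F.hasSiblingIn S y) (hyx : F.parent y = some x) : x ∈ l := by
  obtain ⟨-, -, hchain, -, -, hlast⟩ := hl
  obtain ⟨l₁, l₂, rfl⟩ := List.append_of_mem hy
  cases l₂ with
  | nil => simp [honly, hyx] at hlast
  | cons z l₂ =>
    have hyz : F.parent y = some z := (List.isChain_append_cons_cons.mp hchain).2.1
    obtain rfl : x = z := Option.some_injective _ (hyx.symm.trans hyz)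
    simp

/-- An only-child-path of `S` without the requirement that it start at a leaf. This weaker notion
is the one that can be extended downwards, hence built by induction from the end of the path. -/
structure OnlyChildAscent (F : PForest) (S : Finset ℕ) (l : List ℕ) : Prop where
  ne_nil : l ≠ []
  mem : ∀ x ∈ l, x ∈ S
  isChain : l.IsChain (fun a b => F.parent a = some b)
  not_hasSiblingIn : ∀ x ∈ l.dropLast, ¬ F.hasSiblingIn S x
  getLast : ∀ x, l.getLast? = some x → F.hasSiblingIn S x ∨ F.parent x = none

theorem onlyChildAscent_singleton (hx : x ∈ S)
    (hend : F.hasSiblingIn S x ∨ F.parent x = none) : F.OnlyChildAscent S [x] where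
  ne_nil := by simp
  mem := by simpa
  isChain := by simp
  not_hasSiblingIn := by simp
  getLast := by simpa

theorem OnlyChildAscent.cons (h : F.OnlyChildAscent S (y :: l)) (hx : x ∈ S)
    (honly : ¬ F.hasSiblingIn S x) (hxy : F.parent x = some y) :
    F.OnlyChildAscent S (x :: y :: l) where
  ne_nil := by simp
  mem := List.forall_mem_cons.mpr ⟨hx, h.mem⟩
  isChain := h.isChain.cons_cons hxy
  not_hasSiblingIn := List.forall_mem_cons.mpr ⟨honly, h.not_hasSiblingIn⟩
  getLast := by simpa only [List.getLast?_cons_cons] using h.getLast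

theorem OnlyChildAscent.onlyChildPath (h : F.OnlyChildAscent S (x :: l)) (hx : F.leafIn S x) :
    F.OnlyChildPath S (x :: l) :=
  ⟨h.ne_nil, h.mem, h.isChain, by simpa, h.not_hasSiblingIn, h.getLast⟩

/-- `S` is an upper set of the forest: it contains the parent of each of its nodes that has one.
Pruning preserves this property. -/
def ParentClosed (F : PForest) (S : Finset ℕ) : Prop :=
  ∀ x ∈ S, ∀ y, F.parent x = some y → y ∈ S

theorem ParentClosed.exists_onlyChildAscent (hS : F.ParentClosed S) (hx : x ∈ S) :
    ∃ l, F.OnlyChildAscent S (x :: l) := by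
  refine (S.wellFoundedOn (r := (· > ·))).induction
    (P := fun x => ∃ l, F.OnlyChildAscent S (x :: l)) hx fun x hx ih => ?_
  by_cases hend : F.hasSiblingIn S x ∨ F.parent x = none
  · exact ⟨[], onlyChildAscent_singleton hx hend⟩
  · obtain ⟨honly, hroot⟩ := not_or.mp hend
    obtain ⟨y, hxy⟩ := Option.ne_none_iff_exists'.mp hroot
    obtain ⟨l, hl⟩ := ih y (hS x hx y hxy) (F.parent_lt x y hxy)
    exact ⟨y :: l, hl.cons hx honly hxy⟩

theorem mem_prune : x ∈ F.prune S ↔ x ∈ S ∧ ∀ l, F.OnlyChildPath S l → x ∉ l := by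
  simp [prune]

theorem ParentClosed.notMem_prune_of_leafIn (hS : F.ParentClosed S) (hx : F.leafIn S x) :
    x ∉ F.prune S := by
  obtain ⟨l, hl⟩ := hS.exists_onlyChildAscent hx.1
  exact fun hmem => (mem_prune.mp hmem).2 _ (hl.onlyChildPath hx) List.mem_cons_self

theorem ParentClosed.exists_child_of_mem_prune (hS : F.ParentClosed S) (hx : x ∈ F.prune S) :
    ∃ y ∈ S, F.parent y = some x := by
  by_contra! hleaf
  exact hS.notMem_prune_of_leafIn ⟨(mem_prune.mp hx).1, hleaf⟩ hx

theorem mem_prune_of_not_hasSiblingIn (hx : x ∈ F.prune S) (hy : y ∈ S)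
    (hyx : F.parent y = some x) (honly : ¬ F.hasSiblingIn S y) : y ∈ F.prune S :=
  mem_prune.mpr ⟨hy, fun l hl hyl => (mem_prune.mp hx).2 l hl (hl.parent_mem hyl honly hyx)⟩

theorem ParentClosed.prune (hS : F.ParentClosed S) : F.ParentClosed (F.prune S) := by
  intro y hy x hyx
  obtain ⟨hyS, hy⟩ := mem_prune.mp hy
  exact mem_prune.mpr ⟨hS y hyS x hyx, fun l hl hxl => hy l hl (hl.child_mem hxl hyS hyx)⟩

theorem Ancestor.le (h : F.Ancestor x y) : y ≤ x := by
  induction h with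
  | refl => exact le_rfl
  | tail _ hparent ih => exact ih.trans (F.parent_lt _ _ hparent).le

theorem Ancestor.total (hx : F.Ancestor x z) (hy : F.Ancestor y z) :
    F.Ancestor x y ∨ F.Ancestor y x :=
  (Relation.ReflTransGen.total_of_right_unique
    (fun _ _ _ hb hc => Option.some_injective _ (hb.symm.trans hc)) hx hy).symm

theorem not_ancestor_of_parent_eq {y₁ y₂ : ℕ} (hne : y₁ ≠ y₂) (h₁ : F.parent y₁ = some z)
    (h₂ : F.parent y₂ = some z) : ¬ F.Ancestor y₂ y₁ := by
  intro h
  obtain heq | ⟨w, hw, hy₂w⟩ := Relation.ReflTransGen.cases_head h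
  · exact hne heq
  · obtain rfl : z = w := Option.some_injective _ (h₁.symm.trans hw)
    exact (F.parent_lt y₂ z h₂).not_ge (Ancestor.le hy₂w)

/-- The leaves of the whole forest `F` that lie in the subtree rooted at `x`. -/
def leavesBelow (F : PForest) (x : ℕ) : Finset ℕ :=
  F.leaves.filter (F.Ancestor x)

theorem leavesBelow_subset_of_parent (hyx : F.parent y = some x) :
    F.leavesBelow y ⊆ F.leavesBelow x :=
  Finset.monotone_filter_right _ fun _ _ h => Relation.ReflTransGen.tail h hyx

theorem leavesBelow_nonempty (hx : x ∈ F.nodes) : (F.leavesBelow x).Nonempty := by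
  induction x using Nat.strong_induction_on with
  | _ x ih =>
    obtain hleaf | ⟨y, hy⟩ := (F.children x).eq_empty_or_nonempty
    · exact ⟨x, by simp [leavesBelow, leaves, hx, hleaf, Ancestor, Relation.ReflTransGen.refl]⟩
    · obtain ⟨hynodes, hyx⟩ := Finset.mem_filter.mp hy
      exact (ih y (F.child_lt hy) hynodes).mono (leavesBelow_subset_of_parent hyx)

theorem disjoint_leavesBelow_of_parent_eq {y₁ y₂ : ℕ} (hne : y₁ ≠ y₂)
    (h₁ : F.parent y₁ = some z) (h₂ : F.parent y₂ = some z) :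
    Disjoint (F.leavesBelow y₁) (F.leavesBelow y₂) :=
  Finset.disjoint_filter.mpr fun _ _ hw₁ hw₂ => (Ancestor.total hw₁ hw₂).elim
    (not_ancestor_of_parent_eq hne.symm h₂ h₁) (not_ancestor_of_parent_eq hne h₁ h₂)

theorem card_leavesBelow_add_le {y₁ y₂ : ℕ} (hne : y₁ ≠ y₂)
    (h₁ : F.parent y₁ = some z) (h₂ : F.parent y₂ = some z) :
    (F.leavesBelow y₁).card + (F.leavesBelow y₂).card ≤ (F.leavesBelow z).card := by
  rw [← Finset.card_union_of_disjoint (disjoint_leavesBelow_of_parent_eq hne h₁ h₂)]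
  exact Finset.card_le_card <|
    Finset.union_subset (leavesBelow_subset_of_parent h₁) (leavesBelow_subset_of_parent h₂)

theorem ParentClosed.two_mul_le_card_leavesBelow (hS : F.ParentClosed S)
    (hm : ∀ y ∈ S, m ≤ (F.leavesBelow y).card) (hx : x ∈ F.prune S) :
    2 * m ≤ (F.leavesBelow x).card := by
  induction x using Nat.strong_induction_on with
  | _ x ih =>
    obtain ⟨y, hy, hyx⟩ := hS.exists_child_of_mem_prune hx
    by_cases hsib : F.hasSiblingIn S y
    · obtain ⟨y', hy', hne, hparent, -⟩ := hsib
      have hadd := card_leavesBelow_add_le hne (hparent.trans hyx) hyx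
      have hmy := hm y hy
      have hmy' := hm y' hy'
      omega
    · have hyprune : y ∈ F.prune S := mem_prune_of_not_hasSiblingIn hx hy hyx hsib
      exact (ih y (F.parent_lt y x hyx) hyprune).trans
        (Finset.card_le_card (leavesBelow_subset_of_parent hyx))

theorem Wset_succ (F : PForest) (i : ℕ) : F.Wset (i + 1) = F.prune (F.Wset i) :=
  Function.iterate_succ_apply' ..

theorem parentClosed_Wset (F : PForest) (i : ℕ) : F.ParentClosed (F.Wset i) := by
  induction i with
  | zero => exact F.parent_mem
  | succ i ih => exact F.Wset_succ i ▸ ih.prune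

theorem two_pow_le_card_leavesBelow {i : ℕ} (hx : x ∈ F.Wset i) :
    2 ^ i ≤ (F.leavesBelow x).card := by
  induction i generalizing x with
  | zero => exact Finset.card_pos.mpr (leavesBelow_nonempty hx)
  | succ i ih =>
    rw [Wset_succ] at hx
    rw [pow_succ']
    exact (F.parentClosed_Wset i).two_mul_le_card_leavesBelow (fun _ => ih) hx

theorem two_pow_le_card_leaves {i : ℕ} (h : (F.Wset i).Nonempty) : 2 ^ i ≤ F.leaves.card := by
  obtain ⟨x, hx⟩ := h
  exact (two_pow_le_card_leavesBelow hx).trans (Finset.card_filter_le _ _)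

end PForest

/-- If a full binary forest has `n₀ ≥ 1` leaves, then the pruning
procedure deletes every node within at most `1 + log₂ n₀` iterations: `W_(i)` is
empty for every integer `i ≥ 1 + log₂ n₀`. -/
theorem pruning_terminates (F : PForest) (n₀ : ℕ) (hn : F.leaves.card = n₀)
    (h1 : 1 ≤ n₀) (i : ℕ) (hi : 1 + Real.logb 2 (n₀ : ℝ) ≤ (i : ℝ)) :
    F.Wset i = ∅ := by
  by_contra hne
  have hpow : 2 ^ i ≤ n₀ :=
    hn ▸ PForest.two_pow_le_card_leaves (Finset.nonempty_iff_ne_empty.mpr hne)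
  have hlog : (i : ℝ) ≤ Real.logb 2 n₀ := calc
    (i : ℝ) ≤ Nat.log 2 n₀ := by exact_mod_cast Nat.le_log_of_pow_le one_lt_two hpow
    _ ≤ Real.logb 2 n₀ := Real.natLog_le_logb n₀ 2
  linarith
end
end

section
/- For every integer k ≥ 1 there exists a tower (K_i, φ_i) with K₀ = ∅ whose maps are elementary inclusions or elementary contractions, having n₀ = 2^{k+1} elementary inclusions of vertices and n = 3·2^k elementary inclusions in total (namely 2^{k+1} vertices a₁,…,a_{2^k}, b₁,…,b_{2^k} and the 2^k pairwise disjoint edges {a_j, b_j}, followed by 2^k − 1 elementary contractions of the a-vertices whose contracting forest is a fully balanced binary tree), such that its coning filtration satisfies |K̂_m| ≥ n + k·2^{k−1}. In particular, the coning construction can produce a filtration of size Ω(n·log n₀). -/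
noncomputable section
open scoped Classical

/-- `n`, the number of elementary inclusions of the tower. -/
def ConedTower.numIncl {V : Type*} [DecidableEq V] (T : ConedTower V) : ℕ :=
  ((Finset.range T.m).filter (fun i => ∃ σ, T.step i = Sum.inl σ)).card

/-- `n₀`, the number of elementary inclusions of vertices (0-simplices). -/
def ConedTower.numVertexIncl {V : Type*} [DecidableEq V] (T : ConedTower V) : ℕ :=
  ((Finset.range T.m).filter (fun i => ∃ w : V, T.step i = Sum.inl {w})).card

/-! Start from the `2 ^ k` disjoint edges `{a_j, b_j}`, regarded as stars with root `a_j` and one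
leaf `b_j`, and contract the roots along a balanced binary tree. All leaves stay active, and no leaf
is ever joined to two active roots. Hence, whichever of two roots with `s` leaves each is
deactivated, the cone contains the `s` edges joining the surviving root to the leaves of the other
one, all of them new, and the surviving root then has `2 * s` leaves. The `2 ^ (k - 1 - i)`
contractions at height `i` of the tree join stars with `2 ^ i` leaves, so each of the `k` heights
contributes at least `2 ^ (k - 1)` new simplices. -/

open Finset

section Complexes

variable {V : Type*} [DecidableEq V] {K : Finset (Finset V)}

theorem mem_actCst {w : V} {A τ : Finset V} :
    τ ∈ actCst w K A ↔ τ ∈ K ∧ insert w τ ∈ K ∧ τ ⊆ A := by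
  simp only [actCst, closedStar, mem_filter, and_assoc]

theorem IsComplex.image {W : Type*} [DecidableEq W] (hK : IsComplex K) (f : V → W) :
    IsComplex (K.image (Finset.image f)) := by
  refine forall_mem_image.2 fun σ hσ => ⟨(hK σ hσ).1.image f, fun τ hτ hne => ?_⟩
  obtain ⟨ρ, hρ, rfl⟩ := subset_image_iff.1 hτ
  exact mem_image_of_mem _ ((hK σ hσ).2 ρ hρ hne.of_image)

theorem IsComplex.of_insert_of_card_le {σ : Finset V} (h : IsComplex (insert σ K)) (hσ : σ ∉ K)
    (hmax : ∀ τ ∈ K, #τ ≤ #σ) : IsComplex K := by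
  intro τ hτ
  refine ⟨(h τ (mem_insert_of_mem hτ)).1, fun ρ hρ hne => ?_⟩
  refine mem_of_mem_insert_of_ne ((h τ (mem_insert_of_mem hτ)).2 ρ hρ hne) ?_
  rintro rfl
  exact hσ (eq_of_subset_of_card_le hρ (hmax τ hτ) ▸ hτ)

end Complexes

/-- The data of a coned tower at one index: the complex, the complex of the coning filtration and
the set of active vertices. -/
structure ConingState (V : Type*) where
  K : Finset (Finset V)
  hatK : Finset (Finset V)
  act : Finset V

section Steps

variable {V : Type*} [DecidableEq V]

namespace ConingState

/-- The state after the elementary inclusion of `σ`. -/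
def addSimplex (S : ConingState V) (σ : Finset V) : ConingState V where
  K := insert σ S.K
  hatK := insert σ S.hatK
  act := if #σ = 1 then S.act ∪ σ else S.act

/-- The state after an elementary contraction of `u` and `v` in which `v` stays active: the active
closed star of `u` is coned off from `v`. -/
def coneOnto (S : ConingState V) (u v : V) : ConingState V where
  K := S.K.image (Finset.image (contract u v))
  hatK := S.hatK ∪ (actCst u S.hatK S.act).image (insert v)
  act := S.act.erase u

/-- The state after the elementary contraction of `u` and `v`, which deactivates the vertex with
the smaller active closed star. -/
def merge (S : ConingState V) (u v : V) : ConingState V :=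
  if #(actCst u S.hatK S.act) ≤ #(actCst v S.hatK S.act) then S.coneOnto u v else S.coneOnto v u

/-- The state after an elementary map, encoded as in `ConedTower.step`. -/
def apply (S : ConingState V) : Finset V ⊕ V × V → ConingState V
  | .inl σ => S.addSimplex σ
  | .inr (u, v) => S.merge u v

/-- An elementary map, encoded as in `ConedTower.step`, is admissible if it may follow the state
`S` in a tower. -/
def Admissible (S : ConingState V) : Finset V ⊕ V × V → Prop
  | .inl σ => σ ∉ S.K ∧ IsComplex (insert σ S.K)
  | .inr (u, v) => u ≠ v ∧ {u} ∈ S.K ∧ {v} ∈ S.K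

theorem merge_eq_or (S : ConingState V) (u v : V) :
    S.merge u v = S.coneOnto u v ∨ S.merge u v = S.coneOnto v u :=
  ite_eq_or_eq ..

theorem exists_merge_K_eq_image (S : ConingState V) (u v : V) :
    ∃ f : V → V, (S.merge u v).K = S.K.image (Finset.image f) := by
  rcases S.merge_eq_or u v with h | h <;> exact ⟨_, congrArg K h⟩

theorem Admissible.isComplex_apply {S : ConingState V} {s : Finset V ⊕ V × V}
    (hs : S.Admissible s) (hS : IsComplex S.K) : IsComplex (S.apply s).K := by
  rcases s with σ | ⟨u, v⟩
  · exact hs.2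
  · obtain ⟨f, hf⟩ := S.exists_merge_K_eq_image u v
    exact (congrArg IsComplex hf).mpr (hS.image f)

end ConingState

namespace ConedTower

/-- The final state of a coned tower. -/
def last (T : ConedTower V) : ConingState V :=
  ⟨T.K T.m, T.hatK T.m, T.act T.m⟩

/-- A coned tower prolonged by one elementary map. -/
def snoc (T : ConedTower V) (s : Finset V ⊕ V × V) (hs : T.last.Admissible s) :
    ConedTower V where
  m := T.m + 1
  K i := if i ≤ T.m then T.K i else (T.last.apply s).K
  hatK i := if i ≤ T.m then T.hatK i else (T.last.apply s).hatK
  act i := if i ≤ T.m then T.act i else (T.last.apply s).act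
  step i := if i < T.m then T.step i else s
  K_zero := by simp only [Nat.zero_le, if_true, T.K_zero]
  hatK_zero := by simp only [Nat.zero_le, if_true, T.hatK_zero]
  act_zero := by simp only [Nat.zero_le, if_true, T.act_zero]
  complex i _ := by
    split_ifs with h
    · exact T.complex i h
    · exact hs.isComplex_apply (T.complex T.m le_rfl)
  step_incl i hi σ hσ := by
    rcases Nat.lt_succ_iff_lt_or_eq.1 hi with h | rfl
    · simp only [h, if_true] at hσ
      simpa only [h.le, Nat.succ_le_iff.2 h, if_true] using T.step_incl i h σ hσ
    · simp only [lt_irrefl, if_false] at hσ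
      subst hσ
      simp only [le_rfl, Nat.not_succ_le_self, if_true, if_false]
      exact ⟨(hs.2 σ (mem_insert_self σ _)).1, hs.1, rfl, rfl, rfl⟩
  step_contr i hi u v huv := by
    rcases Nat.lt_succ_iff_lt_or_eq.1 hi with h | rfl
    · simp only [h, if_true] at huv
      simpa only [h.le, Nat.succ_le_iff.2 h, if_true] using T.step_contr i h u v huv
    · simp only [lt_irrefl, if_false] at huv
      subst huv
      simp only [le_rfl, Nat.not_succ_le_self, if_true, if_false]
      refine ⟨hs.1, hs.2.1, hs.2.2, ?_⟩
      split_ifs with h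
      · rw [show T.last.apply (.inr (u, v)) = T.last.coneOnto u v from if_pos h]
        exact ⟨rfl, rfl, rfl⟩
      · rw [show T.last.apply (.inr (u, v)) = T.last.coneOnto v u from if_neg h]
        exact ⟨rfl, rfl, rfl⟩

variable {T : ConedTower V} {s : Finset V ⊕ V × V} {hs : T.last.Admissible s}

theorem last_snoc : (T.snoc s hs).last = T.last.apply s := by
  simp only [last, snoc, Nat.not_succ_le_self, if_false]

theorem card_filter_step_snoc (P : Finset V ⊕ V × V → Prop) :
    #{i ∈ range (T.snoc s hs).m | P ((T.snoc s hs).step i)} =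
      #{i ∈ range T.m | P (T.step i)} + if P s then 1 else 0 := by
  have hlast : (T.snoc s hs).step T.m = s := if_neg (lt_irrefl T.m)
  have hinit : ∀ i ∈ range T.m, (T.snoc s hs).step i = T.step i :=
    fun i hi => if_pos (mem_range.1 hi)
  rw [show (T.snoc s hs).m = T.m + 1 from rfl, card_filter, sum_range_succ, hlast, card_filter]
  exact congrArg (· + _) (sum_congr rfl fun i hi => by rw [hinit i hi])

end ConedTower

/-- `S.Reachable d n₀ n` says that some coned tower ends in the state `S`, has `n₀` elementary
inclusions of vertices and `n` elementary inclusions in total, and contains only simplices with at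
most `d` vertices. -/
def ConingState.Reachable (d n₀ n : ℕ) (S : ConingState V) : Prop :=
  ∃ T : ConedTower V, T.numVertexIncl = n₀ ∧ T.numIncl = n ∧
    (∀ i ≤ T.m, ∀ σ ∈ T.K i, #σ ≤ d) ∧ T.last = S

namespace ConingState

variable {S S' : ConingState V} {d n₀ n : ℕ}

theorem reachable_empty (d : ℕ) : Reachable d 0 0 (⟨∅, ∅, ∅⟩ : ConingState V) :=
  ⟨{ m := 0
     K := fun _ => ∅
     hatK := fun _ => ∅
     act := fun _ => ∅
     step := fun _ => .inl ∅
     K_zero := rfl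
     hatK_zero := rfl
     act_zero := rfl
     complex := fun _ _ σ hσ => absurd hσ (notMem_empty σ)
     step_incl := fun _ hi => absurd hi (Nat.not_lt_zero _)
     step_contr := fun _ hi => absurd hi (Nat.not_lt_zero _) },
    rfl, rfl, fun _ _ σ hσ => absurd hσ (notMem_empty σ), rfl⟩

theorem Reachable.apply (h : S.Reachable d n₀ n) {s : Finset V ⊕ V × V} (hs : S.Admissible s)
    (hd : ∀ σ ∈ (S.apply s).K, #σ ≤ d) :
    (S.apply s).Reachable d (n₀ + if ∃ w : V, s = .inl {w} then 1 else 0)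
      (n + if ∃ σ, s = .inl σ then 1 else 0) := by
  obtain ⟨T, rfl, rfl, hT, rfl⟩ := h
  refine ⟨T.snoc s hs, ConedTower.card_filter_step_snoc fun t => ∃ w : V, t = .inl {w},
    ConedTower.card_filter_step_snoc fun t => ∃ σ, t = .inl σ, fun i _ σ hσ => ?_,
    ConedTower.last_snoc⟩
  simp only [ConedTower.snoc] at hσ
  split_ifs at hσ with hi
  · exact hT i hi σ hσ
  · exact hd σ hσ

theorem Reachable.card_le (h : S.Reachable d n₀ n) : ∀ σ ∈ S.K, #σ ≤ d := by
  obtain ⟨T, -, -, hT, rfl⟩ := h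
  exact hT T.m le_rfl

theorem Reachable.addSimplex (h : S.Reachable d n₀ n) {σ : Finset V} (hσ : σ ∉ S.K)
    (hK : IsComplex (insert σ S.K)) (hd : #σ ≤ d) :
    (S.addSimplex σ).Reachable d (n₀ + if #σ = 1 then 1 else 0) (n + 1) := by
  have h' : (S.addSimplex σ).Reachable d _ _ :=
    h.apply (s := .inl σ) ⟨hσ, hK⟩ ((forall_mem_insert _ _ _).2 ⟨hd, h.card_le⟩)
  simpa only [Sum.inl.injEq, ← card_eq_one, exists_eq', if_true] using h'

theorem Reachable.merge (h : S.Reachable d n₀ n) {u v : V} (huv : u ≠ v) (hu : {u} ∈ S.K)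
    (hv : {v} ∈ S.K) : (S.merge u v).Reachable d n₀ n := by
  have hd : ∀ σ ∈ (S.merge u v).K, #σ ≤ d := by
    obtain ⟨f, hf⟩ := S.exists_merge_K_eq_image u v
    rw [hf]
    exact forall_mem_image.2 fun σ hσ => card_image_le.trans (h.card_le σ hσ)
  have h' : (S.merge u v).Reachable d _ _ := h.apply (s := .inr (u, v)) ⟨huv, hu, hv⟩ hd
  simpa only [reduceCtorEq, exists_false, if_false, add_zero] using h'

/-- The simplices are included in order of increasing dimension. -/
theorem exists_reachable_of_isComplex (K : Finset (Finset V)) :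
    IsComplex K → (∀ σ ∈ K, #σ ≤ d) →
      ∃ S : ConingState V, S.Reachable d #{σ ∈ K | #σ = 1} #K ∧ S.K = K ∧ S.hatK = K ∧
        ∀ v, {v} ∈ K → v ∈ S.act := by
  refine induction_on_max_value card K (fun _ _ => ⟨_, reachable_empty d, rfl, rfl, ?_⟩) ?_
  · exact fun v hv => absurd hv (notMem_empty _)
  intro σ K hσ hmax ih hK hd
  obtain ⟨S, hS, hSK, hSH, hact⟩ := ih (hK.of_insert_of_card_le hσ hmax)
    fun τ hτ => hd τ (mem_insert_of_mem hτ)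
  refine ⟨S.addSimplex σ, ?_, congrArg (insert σ) hSK, congrArg (insert σ) hSH, fun v hv => ?_⟩
  · have hσK : σ ∉ S.K := hSK ▸ hσ
    have h := hS.addSimplex hσK (hSK ▸ hK) (hd σ (mem_insert_self σ K))
    rwa [card_insert_of_notMem hσ, card_filter, sum_insert hσ, add_comm, ← card_filter]
  · simp only [ConingState.addSimplex]
    rcases mem_insert.1 hv with rfl | hv
    · simp only [card_singleton, if_true, mem_union, mem_singleton, or_true]
    · split_ifs
      · exact mem_union_left _ (hact v hv)
      · exact hact v hv

/-- `S.MergesTo S'` says that a sequence of elementary contractions leads from `S` to `S'`. -/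
def MergesTo : ConingState V → ConingState V → Prop :=
  Relation.ReflTransGen fun S S' =>
    ∃ u v, u ≠ v ∧ {u} ∈ S.K ∧ {v} ∈ S.K ∧ S' = S.merge u v

theorem Reachable.mergesTo (h : S.Reachable d n₀ n) (hS : S.MergesTo S') :
    S'.Reachable d n₀ n := by
  induction hS with
  | refl => exact h
  | tail _ hstep ih =>
    obtain ⟨u, v, huv, hu, hv, rfl⟩ := hstep
    exact ih.merge huv hu hv

theorem MergesTo.hatK_subset (hS : S.MergesTo S') : S.hatK ⊆ S'.hatK := by
  induction hS with
  | refl => exact Subset.rfl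
  | tail _ hstep ih =>
    obtain ⟨u, v, -, -, -, rfl⟩ := hstep
    refine ih.trans ?_
    rcases merge_eq_or _ u v with h | h <;> exact h ▸ subset_union_left

end ConingState

end Steps

section StarForest

variable {V : Type*} [DecidableEq V]

namespace ConingState

/-- The elements of `B` joined to `r` by an edge of the coning filtration. -/
def leaves (S : ConingState V) (B : Finset V) (r : V) : Finset V :=
  {b ∈ B | {r, b} ∈ S.hatK}

/-- A family of disjoint stars in the coning filtration, with roots `R` that may still be
contracted and active leaves `B`; the star of a root `r` is spanned by `S.leaves B r`. -/
structure StarForest (S : ConingState V) (R B : Finset V) : Prop where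
  root_mem : ∀ r ∈ R, {r} ∈ S.K
  disjoint : Disjoint R B
  leaf_mem : ∀ b ∈ B, {b} ∈ S.hatK
  leaf_active : B ⊆ S.act
  root_unique : ∀ b ∈ B, ∀ r ∈ R, ∀ r' ∈ R, {r, b} ∈ S.hatK → {r', b} ∈ S.hatK → r = r'

variable {S S' : ConingState V} {R R' B : Finset V} {b r u v w : V} {s : ℕ}

theorem mem_leaves : b ∈ S.leaves B r ↔ b ∈ B ∧ {r, b} ∈ S.hatK :=
  mem_filter

theorem leaves_mono (h : S.hatK ⊆ S'.hatK) : S.leaves B r ⊆ S'.leaves B r :=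
  monotone_filter_right B fun _ _ hb => h hb

namespace StarForest

theorem anti (h : S.StarForest R B) (hR : R' ⊆ R) : S.StarForest R' B where
  root_mem r hr := h.root_mem r (hR hr)
  disjoint := disjoint_of_subset_left hR h.disjoint
  leaf_mem := h.leaf_mem
  leaf_active := h.leaf_active
  root_unique b hb r hr r' hr' := h.root_unique b hb r (hR hr) r' (hR hr')

theorem ne_of_mem (h : S.StarForest R B) (hr : r ∈ R) (hb : b ∈ B) : r ≠ b :=
  (ne_of_mem_of_not_mem hb (disjoint_left.1 h.disjoint hr)).symm

theorem disjoint_leaves (h : S.StarForest R B) (hu : u ∈ R) (hv : v ∈ R) (huv : u ≠ v) :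
    Disjoint (S.leaves B u) (S.leaves B v) :=
  disjoint_left.2 fun b hbu hbv =>
    huv (h.root_unique b (mem_leaves.1 hbu).1 u hu v hv (mem_leaves.1 hbu).2 (mem_leaves.1 hbv).2)

theorem pair_mem_image_actCst (h : S.StarForest R B) (hb : b ∈ S.leaves B u) (v : V) :
    {v, b} ∈ (actCst u S.hatK S.act).image (insert v) := by
  obtain ⟨hbB, hub⟩ := mem_leaves.1 hb
  exact mem_image_of_mem _ <| mem_actCst.2
    ⟨h.leaf_mem b hbB, hub, singleton_subset_iff.2 (h.leaf_active hbB)⟩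

theorem pair_mem_hatK_of_coneOnto (h : S.StarForest R B) (hv : v ∈ R) (hb : b ∈ B)
    (hwb : {w, b} ∈ (S.coneOnto u v).hatK) :
    {w, b} ∈ S.hatK ∨ w = v ∧ {u, b} ∈ S.hatK := by
  rcases mem_union.1 hwb with hold | hcone
  · exact .inl hold
  obtain ⟨τ, hτ, hτwb⟩ := mem_image.1 hcone
  obtain ⟨hτK, huτ, -⟩ := mem_actCst.1 hτ
  by_cases hvτ : v ∈ τ
  · exact .inl (hτwb ▸ (insert_eq_of_mem hvτ).symm ▸ hτK)
  have hvb : v ≠ b := h.ne_of_mem hv hb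
  have hvw : v = w := by
    have hv_mem : v ∈ ({w, b} : Finset V) := by
      rw [← hτwb]
      exact mem_insert_self v τ
    simpa only [mem_insert, mem_singleton, hvb, or_false] using hv_mem
  have hτb : τ = {b} := by
    rw [← erase_insert hvτ, hτwb, hvw, erase_insert (notMem_singleton.2 (hvw ▸ hvb))]
  exact .inr ⟨hvw.symm, hτb ▸ huτ⟩

theorem coneOnto (h : S.StarForest R B) (hu : u ∈ R) (hv : v ∈ R) :
    (S.coneOnto u v).StarForest (R.erase u) B where
  root_mem r hr := by
    have hru : contract u v r = r := if_neg (ne_of_mem_erase hr)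
    exact mem_image.2 ⟨{r}, h.root_mem r (mem_of_mem_erase hr), by rw [image_singleton, hru]⟩
  disjoint := disjoint_of_subset_left (erase_subset u R) h.disjoint
  leaf_mem b hb := mem_union_left _ (h.leaf_mem b hb)
  leaf_active := subset_erase.2 ⟨h.leaf_active, disjoint_left.1 h.disjoint hu⟩
  root_unique b hb r hr r' hr' hrb hrb' := by
    have ne_of_joined : ∀ w ∈ R.erase u, {u, b} ∈ S.hatK → {w, b} ∉ S.hatK := fun w hw hub hwb =>
      ne_of_mem_erase hw (h.root_unique b hb w (mem_of_mem_erase hw) u hu hwb hub)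
    rcases h.pair_mem_hatK_of_coneOnto hv hb hrb with hold | ⟨rfl, hub⟩ <;>
      rcases h.pair_mem_hatK_of_coneOnto hv hb hrb' with hold' | ⟨rfl, hub'⟩
    · exact h.root_unique b hb r (mem_of_mem_erase hr) r' (mem_of_mem_erase hr') hold hold'
    · exact absurd hold (ne_of_joined r hr hub')
    · exact absurd hold' (ne_of_joined r' hr' hub)
    · rfl

theorem le_card_leaves_coneOnto (h : S.StarForest R B) (hu : u ∈ R) (hv : v ∈ R) (huv : u ≠ v) :
    #(S.leaves B u) + #(S.leaves B v) ≤ #((S.coneOnto u v).leaves B v) := by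
  rw [← card_union_of_disjoint (h.disjoint_leaves hu hv huv)]
  refine card_le_card (union_subset (fun b hb => ?_) (leaves_mono subset_union_left))
  exact mem_leaves.2 ⟨(mem_leaves.1 hb).1, mem_union_right _ (h.pair_mem_image_actCst hb v)⟩

theorem le_card_hatK_coneOnto (h : S.StarForest R B) (hu : u ∈ R) (hv : v ∈ R) (huv : u ≠ v) :
    #S.hatK + #(S.leaves B u) ≤ #(S.coneOnto u v).hatK := by
  have hinj : Set.InjOn (fun b => ({v, b} : Finset V)) (S.leaves B u) := fun b hb c _ hbc => by
    have hvb : v ≠ b := h.ne_of_mem hv (mem_leaves.1 hb).1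
    have hbvc : b ∈ ({v, c} : Finset V) :=
      (congrArg (b ∈ ·) hbc).mp (mem_insert_of_mem (mem_singleton_self b))
    simpa only [mem_insert, mem_singleton, hvb.symm, false_or] using hbvc
  have hdisj : Disjoint S.hatK ((S.leaves B u).image fun b => {v, b}) := by
    refine disjoint_right.2 (forall_mem_image.2 fun b hb hvb => huv ?_)
    obtain ⟨hbB, hub⟩ := mem_leaves.1 hb
    exact h.root_unique b hbB u hu v hv hub hvb
  rw [← card_image_of_injOn hinj, ← card_union_of_disjoint hdisj]
  exact card_le_card <| union_subset_union_right <|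
    image_subset_iff.2 fun b hb => h.pair_mem_image_actCst hb v

theorem merge (h : S.StarForest R B) (hu : u ∈ R) (hv : v ∈ R) (huv : u ≠ v)
    (hsu : s ≤ #(S.leaves B u)) (hsv : s ≤ #(S.leaves B v)) :
    ∃ r ∈ ({u, v} : Finset V), (S.merge u v).StarForest (insert r (R \ {u, v})) B ∧
      2 * s ≤ #((S.merge u v).leaves B r) ∧ #S.hatK + s ≤ #(S.merge u v).hatK := by
  have erase_superset : ∀ {x y}, x ≠ y → y ∈ R → insert y (R \ {x, y}) ⊆ R.erase x := by
    intro x y hxy hy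
    refine insert_subset (mem_erase.2 ⟨hxy.symm, hy⟩) ?_
    exact sdiff_singleton_eq_erase x R ▸ sdiff_subset_sdiff Subset.rfl (by simp)
  rcases S.merge_eq_or u v with hS | hS <;> rw [hS]
  · refine ⟨v, by simp, (h.coneOnto hu hv).anti (erase_superset huv hv), ?_, ?_⟩
    · have := h.le_card_leaves_coneOnto hu hv huv
      lia
    · exact (Nat.add_le_add_left hsu _).trans (h.le_card_hatK_coneOnto hu hv huv)
  · rw [pair_comm]
    refine ⟨u, by simp, (h.coneOnto hv hu).anti (erase_superset huv.symm hu), ?_, ?_⟩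
    · have := h.le_card_leaves_coneOnto hv hu huv.symm
      lia
    · exact (Nat.add_le_add_left hsv _).trans (h.le_card_hatK_coneOnto hv hu huv.symm)

/-- The `2 ^ j` roots in `Q` are contracted along a balanced binary tree of height `j`. -/
theorem exists_mergesTo_of_card_eq_two_pow (j : ℕ) :
    ∀ {S : ConingState V} {R Q : Finset V}, S.StarForest R B → Q ⊆ R → #Q = 2 ^ j →
      (∀ r ∈ Q, s ≤ #(S.leaves B r)) →
      ∃ S' : ConingState V, ∃ r ∈ Q, S.MergesTo S' ∧ S'.StarForest (insert r (R \ Q)) B ∧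
        2 ^ j * s ≤ #(S'.leaves B r) ∧ 2 * #S.hatK + j * 2 ^ j * s ≤ 2 * #S'.hatK := by
  induction j with
  | zero =>
    intro S R Q h hQR hQ hs
    obtain ⟨r, rfl⟩ := card_eq_one.1 hQ
    refine ⟨S, r, mem_singleton_self r, .refl, h.anti ?_, ?_, ?_⟩
    · exact insert_subset (singleton_subset_iff.1 hQR) sdiff_subset
    · simpa only [pow_zero, one_mul] using hs r (mem_singleton_self r)
    · simp only [zero_mul, add_zero, le_rfl]
  | succ j ih =>
    intro S R Q h hQR hQ hs
    obtain ⟨Q₁, hQ₁, hcard₁⟩ : ∃ Q₁ ⊆ Q, #Q₁ = 2 ^ j :=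
      exists_subset_card_eq (hQ ▸ Nat.pow_le_pow_right two_pos j.le_succ)
    have hcard₂ : #(Q \ Q₁) = 2 ^ j := by
      rw [card_sdiff_of_subset hQ₁, hQ, hcard₁, pow_succ]
      lia
    obtain ⟨S₁, u, hu, hmerge₁, hforest₁, hleaves₁, hsize₁⟩ :=
      ih h (hQ₁.trans hQR) hcard₁ fun r hr => hs r (hQ₁ hr)
    obtain ⟨S₂, v, hv, hmerge₂, hforest₂, hleaves₂, hsize₂⟩ := ih hforest₁ (Q := Q \ Q₁)
      ((sdiff_subset_sdiff hQR Subset.rfl).trans (subset_insert _ _)) hcard₂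
      fun r hr => (hs r (sdiff_subset hr)).trans (card_le_card (leaves_mono hmerge₁.hatK_subset))
    have huR : u ∈ insert v (insert u (R \ Q₁) \ (Q \ Q₁)) := by grind
    have huv : u ≠ v := fun huv => (mem_sdiff.1 hv).2 (huv ▸ hu)
    obtain ⟨r, hr, hforest, hleaves, hsize⟩ := hforest₂.merge huR (mem_insert_self v _) huv
      (hleaves₁.trans (card_le_card (leaves_mono hmerge₂.hatK_subset))) hleaves₂
    refine ⟨S₂.merge u v, r, by grind, (hmerge₁.trans hmerge₂).tail ⟨u, v, huv,
      hforest₂.root_mem u huR, hforest₂.root_mem v (mem_insert_self v _), rfl⟩,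
      hforest.anti (by grind), ?_, ?_⟩
    · rwa [pow_succ', mul_assoc]
    · calc 2 * #S.hatK + (j + 1) * 2 ^ (j + 1) * s
        _ = 2 * #S.hatK + j * 2 ^ j * s + j * 2 ^ j * s + 2 * (2 ^ j * s) := by ring
        _ ≤ 2 * #(S₂.merge u v).hatK := by lia

end StarForest

end ConingState

end StarForest

section Matching

variable {V ι : Type*} [DecidableEq V] [Fintype ι]

/-- The complex of the pairwise disjoint edges `{a i, b i}` for `i : ι`, where `a = e ∘ Sum.inl` and
`b = e ∘ Sum.inr`. -/
def matchingComplex (e : ι ⊕ ι ↪ V) : Finset (Finset V) :=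
  univ.biUnion fun i => ({e (.inl i), e (.inr i)} : Finset V).powerset.erase ∅

variable {e : ι ⊕ ι ↪ V}

theorem mem_matchingComplex {σ : Finset V} :
    σ ∈ matchingComplex e ↔ σ.Nonempty ∧ ∃ i, σ ⊆ {e (.inl i), e (.inr i)} := by
  simp only [matchingComplex, mem_biUnion, mem_univ, true_and, mem_erase, mem_powerset,
    nonempty_iff_ne_empty, exists_and_left]

theorem isComplex_matchingComplex : IsComplex (matchingComplex e) := by
  intro σ hσ
  obtain ⟨hne, i, hi⟩ := mem_matchingComplex.1 hσ
  exact ⟨hne, fun τ hτ hτne => mem_matchingComplex.2 ⟨hτne, i, hτ.trans hi⟩⟩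

theorem card_le_two_of_mem_matchingComplex {σ : Finset V} (hσ : σ ∈ matchingComplex e) :
    #σ ≤ 2 := by
  obtain ⟨-, i, hi⟩ := mem_matchingComplex.1 hσ
  exact (card_le_card hi).trans card_le_two

theorem singleton_mem_matchingComplex {v : V} : {v} ∈ matchingComplex e ↔ ∃ x, e x = v := by
  simp only [mem_matchingComplex, singleton_nonempty, singleton_subset_iff, mem_insert,
    mem_singleton, true_and, exists_or, Sum.exists, eq_comm]

theorem pair_mem_matchingComplex {i j : ι} :
    {e (.inl i), e (.inr j)} ∈ matchingComplex e ↔ i = j := by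
  simp only [mem_matchingComplex, insert_nonempty, insert_subset_iff, singleton_subset_iff,
    mem_insert, mem_singleton, e.injective.eq_iff, Sum.inl.injEq, Sum.inr.injEq, reduceCtorEq,
    or_false, false_or, true_and, exists_eq_left', eq_comm]

theorem card_matchingComplex : #(matchingComplex e) = 3 * Fintype.card ι := by
  have hdisj : ((univ : Finset ι) : Set ι).PairwiseDisjoint fun i =>
      ({e (.inl i), e (.inr i)} : Finset V).powerset.erase ∅ := by
    intro i _ j _ hij
    refine disjoint_left.2 fun σ hσi hσj => hij ?_
    simp only [mem_erase, mem_powerset] at hσi hσj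
    obtain ⟨x, hx⟩ := nonempty_iff_ne_empty.2 hσi.1
    have hxi := hσi.2 hx
    have hxj := hσj.2 hx
    grind [e.injective.eq_iff]
  have hcard : ∀ i, #(({e (.inl i), e (.inr i)} : Finset V).powerset.erase ∅) = 3 := fun i => by
    rw [card_erase_of_mem (empty_mem_powerset _), card_powerset,
      card_pair (e.injective.ne Sum.inl_ne_inr)]
    rfl
  rw [matchingComplex, card_biUnion hdisj, sum_const_nat fun i _ => hcard i, card_univ, mul_comm]

theorem card_vertices_matchingComplex :
    #{σ ∈ matchingComplex e | #σ = 1} = 2 * Fintype.card ι := by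
  have hmap : {σ ∈ matchingComplex e | #σ = 1} = univ.image fun x => {e x} := by
    ext σ
    simp only [mem_filter, mem_image, mem_univ, true_and, card_eq_one]
    constructor
    · rintro ⟨hσ, v, rfl⟩
      exact (singleton_mem_matchingComplex.1 hσ).imp fun x hx => congrArg _ hx
    · rintro ⟨x, rfl⟩
      exact ⟨singleton_mem_matchingComplex.2 ⟨x, rfl⟩, e x, rfl⟩
  have hinj : Function.Injective fun x => ({e x} : Finset V) :=
    singleton_injective.comp e.injective
  rw [hmap, card_image_of_injective _ hinj, card_univ, Fintype.card_sum, two_mul]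

theorem starForest_of_hatK_eq_matchingComplex {S : ConingState V} (hK : S.K = matchingComplex e)
    (hhatK : S.hatK = matchingComplex e) (hact : ∀ v, {v} ∈ matchingComplex e → v ∈ S.act) :
    S.StarForest (univ.image fun i => e (.inl i)) (univ.image fun i => e (.inr i)) where
  root_mem := forall_mem_image.2 fun i _ => hK ▸ singleton_mem_matchingComplex.2 ⟨_, rfl⟩
  disjoint := by
    refine disjoint_left.2 (forall_mem_image.2 fun i _ hi => ?_)
    obtain ⟨j, -, hj⟩ := mem_image.1 hi
    exact Sum.inr_ne_inl (e.injective hj)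
  leaf_mem := forall_mem_image.2 fun i _ => hhatK ▸ singleton_mem_matchingComplex.2 ⟨_, rfl⟩
  leaf_active := image_subset_iff.2 fun i _ =>
    hact _ (singleton_mem_matchingComplex.2 ⟨.inr i, rfl⟩)
  root_unique := by
    simp only [hhatK, forall_mem_image, pair_mem_matchingComplex]
    rintro _ - _ - _ - rfl rfl
    rfl

theorem exists_reachable_starForest (e : ι ⊕ ι ↪ V) :
    ∃ (S : ConingState V) (R B : Finset V),
      S.Reachable 2 (2 * Fintype.card ι) (3 * Fintype.card ι) ∧ S.StarForest R B ∧
      #R = Fintype.card ι ∧ (∀ r ∈ R, 1 ≤ #(S.leaves B r)) ∧ #S.hatK = 3 * Fintype.card ι := by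
  obtain ⟨S, hS, hK, hhatK, hact⟩ := ConingState.exists_reachable_of_isComplex (matchingComplex e)
    isComplex_matchingComplex fun _ => card_le_two_of_mem_matchingComplex
  rw [card_vertices_matchingComplex, card_matchingComplex] at hS
  refine ⟨S, _, _, hS, starForest_of_hatK_eq_matchingComplex hK hhatK hact, ?_, ?_, ?_⟩
  · exact card_image_of_injective univ (e.injective.comp Sum.inl_injective)
  · refine forall_mem_image.2 fun i _ => card_pos.2 ⟨e (.inr i), ConingState.mem_leaves.2 ?_⟩
    exact ⟨mem_image_of_mem _ (mem_univ i), hhatK ▸ pair_mem_matchingComplex.2 rfl⟩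
  · rw [hhatK, card_matchingComplex]

end Matching

theorem exists_tower_large_coning_general {V : Type*} [DecidableEq V] (k : ℕ)
    (e : Fin (2 ^ k) ⊕ Fin (2 ^ k) ↪ V) :
    ∃ T : ConedTower V,
      T.numVertexIncl = 2 ^ (k + 1) ∧
      T.numIncl = 3 * 2 ^ k ∧
      (∀ i ≤ T.m, ∀ σ ∈ T.K i, σ.card ≤ 2) ∧
      3 * 2 ^ k + k * 2 ^ (k - 1) ≤ (T.hatK T.m).card := by
  obtain ⟨S, R, B, hS, hforest, hR, hleaves, hcard⟩ := exists_reachable_starForest e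
  rw [Fintype.card_fin] at hS hR hcard
  obtain ⟨S', r, -, hmerge, -, -, hsize⟩ :=
    hforest.exists_mergesTo_of_card_eq_two_pow k Subset.rfl hR hleaves
  obtain ⟨T, hn₀, hn, hdim, rfl⟩ := hS.mergesTo hmerge
  refine ⟨T, hn₀.trans (pow_succ' 2 k).symm, hn, hdim, ?_⟩
  have hhalf : k * 2 ^ k = 2 * (k * 2 ^ (k - 1)) := by
    rcases k with - | k
    · rfl
    · rw [Nat.add_sub_cancel, pow_succ']
      ring
  change 3 * 2 ^ k + k * 2 ^ (k - 1) ≤ #T.last.hatK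
  lia

/-- For every integer `k ≥ 1` there exists a tower (of dimension at
most 1, i.e. all simplices have at most 2 vertices) with `n₀ = 2^(k+1)` elementary
inclusions of vertices and `n = 3·2^k` elementary inclusions in total, whose coning
filtration satisfies `|K̂_m| ≥ n + k·2^(k−1)`.  In particular, the coning
construction can produce a filtration of size `Ω(n·log n₀)`. -/
theorem exists_tower_large_coning (k : ℕ) (hk : 1 ≤ k) :
    ∃ T : ConedTower ℕ,
      T.numVertexIncl = 2 ^ (k + 1) ∧
      T.numIncl = 3 * 2 ^ k ∧
      (∀ i ≤ T.m, ∀ σ ∈ T.K i, σ.card ≤ 2) ∧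
      3 * 2 ^ k + k * 2 ^ (k - 1) ≤ (T.hatK T.m).card :=
  exists_tower_large_coning_general k (finSumFinEquiv.toEmbedding.trans Fin.valEmbedding)
end
end
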